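/- Let λ ≠ 0 and k be real constants and write r² = x² + y². Suppose x, y : ℝ → ℝ are twice differentiable with x(t)² + y(t)² > 0 for all t, and satisfy the Newtonian equations of motion for the potential V(x,y) = −(λ²/8)·r² + k/r². Then the exponentially time-dependent cubic function I(t) = e^{λt}·(x·y' − y·x')·[x'² + y'² − λ(x·x' + y·y') + (λ²/4)·r² + 2k/r²] is constant in t; moreover the quadratic factor Q(t) = e^{λt}·[x'² + y'² − λ(x·x' + y·y') + (λ²/4)·r² + 2k/r²] is itself constant in t. -/

import Mathlib

/-!
Write `q = (x, y)`. For a potential `V p = -(λ² / 8) ‖p‖² + U p` with `U` homogeneous of degree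
`-2`, the change of variables `ρ = exp (-λ t / 2) q`, `ds = exp (-λ t) dt` turns the motion into the
autonomous one in the potential `U` alone: `dρ/ds = exp (λ t / 2) (q' - (λ / 2) q)`. Twice the
conserved energy of the new motion is `exp (λ t) (‖q' - (λ / 2) q‖² + 2 U q)`, which for
`U p = k / ‖p‖²` is `Q`. Since `V` is then central, both coordinates solve the same linear equation
`u'' = c(t) u`, so their Wronskian `L = x y' - y x'` is constant, and `I = L Q`.
-/

theorem eq_of_forall_hasDerivAt_zero {𝕜 G : Type*} [RCLike 𝕜] [NormedAddCommGroup G]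
    [NormedSpace 𝕜 G] {f : 𝕜 → G} (hf : ∀ t, HasDerivAt f 0 t) (a b : 𝕜) : f a = f b :=
  is_const_of_deriv_eq_zero (fun t ↦ (hf t).differentiableAt) (fun t ↦ (hf t).deriv) a b

section Wronskian

variable {𝕜 A : Type*} [NontriviallyNormedField 𝕜] [NormedCommRing A] [NormedAlgebra 𝕜 A]

theorem hasDerivAt_wronskian_zero {x y x' y' : 𝕜 → A} {c : A} {t : 𝕜}
    (hx : HasDerivAt x (x' t) t) (hy : HasDerivAt y (y' t) t)
    (hx' : HasDerivAt x' (c * x t) t) (hy' : HasDerivAt y' (c * y t) t) :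
    HasDerivAt (fun s ↦ x s * y' s - y s * x' s) 0 t :=
  ((hx.mul hy').sub (hy.mul hx')).congr_deriv (by ring)

end Wronskian

section DilatedEnergy

open scoped RealInnerProductSpace

variable {E : Type*} [NormedAddCommGroup E] [InnerProductSpace ℝ E]

/-- Twice the energy, in the potential `U`, of the motion `ρ = exp (-lam * t / 2) • q` with respect
to the time `s` with `ds = exp (-lam * t) dt`, when `U` is homogeneous of degree `-2`. Here `v` is
the velocity of `q`. -/
noncomputable def dilatedEnergy (lam : ℝ) (U : E → ℝ) (q v : ℝ → E) (t : ℝ) : ℝ :=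
  Real.exp (lam * t) * (‖v t - (lam / 2) • q t‖ ^ 2 + 2 * U (q t))

variable [CompleteSpace E]

theorem hasDerivAt_comp_of_hasGradientAt {U : E → ℝ} {q : ℝ → E} {g q' : E} {t : ℝ}
    (hU : HasGradientAt U g (q t)) (hq : HasDerivAt q q' t) :
    HasDerivAt (fun s ↦ U (q s)) ⟪g, q'⟫ t :=
  (hU.hasFDerivAt.comp_hasDerivAt t hq).congr_deriv (InnerProductSpace.toDual_apply_apply)

theorem hasGradientAt_comp_norm_sq {F : ℝ → ℝ} {F' : ℝ} {p : E} (hF : HasDerivAt F F' (‖p‖ ^ 2)) :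
    HasGradientAt (fun p ↦ F (‖p‖ ^ 2)) ((2 * F') • p) p := by
  rw [hasGradientAt_iff_hasFDerivAt]
  refine (hF.comp_hasFDerivAt p (hasStrictFDerivAt_norm_sq p).hasFDerivAt).congr_fderiv ?_
  ext w
  simp only [smul_apply, coe_innerSL_apply, nsmul_eq_mul, Nat.cast_ofNat, smul_eq_mul, map_smul,
    InnerProductSpace.toDual_apply_apply]
  ring

-- Homogeneity of degree `-2` enters only through Euler's identity `hEuler`.
theorem hasDerivAt_dilatedEnergy_zero {lam : ℝ} {U : E → ℝ} {q v : ℝ → E} {g : E} {t : ℝ}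
    (hq : HasDerivAt q (v t) t) (hv : HasDerivAt v ((lam ^ 2 / 4) • q t - g) t)
    (hU : HasGradientAt U g (q t)) (hEuler : ⟪g, q t⟫ = -2 * U (q t)) :
    HasDerivAt (dilatedEnergy lam U q v) 0 t := by
  have hw : HasDerivAt (fun s ↦ v s - (lam / 2) • q s)
      (-(lam / 2) • (v t - (lam / 2) • q t) - g) t :=
    (hv.sub (hq.const_smul (lam / 2))).congr_deriv (by module)
  have hexp : HasDerivAt (fun s ↦ Real.exp (lam * s)) (Real.exp (lam * t) * lam) t := by
    simpa using ((hasDerivAt_id t).const_mul lam).exp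
  have hUq := hasDerivAt_comp_of_hasGradientAt hU hq
  refine (hexp.mul (hw.norm_sq.add (hUq.const_mul 2))).congr_deriv ?_
  have hpower : ⟪g, v t⟫ = ⟪v t - (lam / 2) • q t, g⟫ - lam * U (q t) := by
    rw [inner_sub_left, real_inner_smul_left, real_inner_comm g (v t), real_inner_comm g (q t),
      hEuler]
    ring
  rw [hpower, inner_sub_right, real_inner_smul_right, real_inner_self_eq_norm_sq]
  simp only [Pi.add_apply]
  ring

theorem hasDerivAt_dilatedEnergy_const_div_norm_sq {lam k : ℝ} {q v : ℝ → E} {t : ℝ}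
    (hq : HasDerivAt q (v t) t)
    (hv : HasDerivAt v ((lam ^ 2 / 4 + 2 * k / (‖q t‖ ^ 2) ^ 2) • q t) t) (hq₀ : q t ≠ 0) :
    HasDerivAt (dilatedEnergy lam (fun p ↦ k / ‖p‖ ^ 2) q v) 0 t := by
  have hr : ‖q t‖ ^ 2 ≠ 0 := by simpa using hq₀
  have hinv : HasDerivAt (fun s ↦ k / s) (-k / (‖q t‖ ^ 2) ^ 2) (‖q t‖ ^ 2) :=
    ((hasDerivAt_const _ k).div (hasDerivAt_id _) hr).congr_deriv (by simp)
  refine hasDerivAt_dilatedEnergy_zero hq (hv.congr_deriv ?_) (hasGradientAt_comp_norm_sq hinv) ?_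
  · module
  · rw [real_inner_smul_left, real_inner_self_eq_norm_sq]
    field_simp

end DilatedEnergy

section Plane

theorem hasDerivAt_vec₂ {x y : ℝ → ℝ} {x' y' t : ℝ} (hx : HasDerivAt x x' t)
    (hy : HasDerivAt y y' t) : HasDerivAt (fun s ↦ !₂[x s, y s]) !₂[x', y'] t := by
  have hpi : HasDerivAt (fun s ↦ ![x s, y s]) ![x', y'] t :=
    hasDerivAt_pi.2 (Fin.forall_fin_two.2 ⟨hx, hy⟩)
  exact (PiLp.hasFDerivAt_toLp 2 _).comp_hasDerivAt t hpi

theorem norm_sq_vec₂ (a b : ℝ) : ‖!₂[a, b]‖ ^ 2 = a ^ 2 + b ^ 2 := by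
  simp [EuclideanSpace.real_norm_sq_eq]

theorem vec₂_ne_zero {a b : ℝ} (h : a ^ 2 + b ^ 2 ≠ 0) : !₂[a, b] ≠ 0 := by
  rwa [← norm_sq_vec₂, pow_ne_zero_iff two_ne_zero, norm_ne_zero_iff] at h

theorem dilatedEnergy_vec₂ (lam k : ℝ) (x y x' y' : ℝ → ℝ) (t : ℝ) :
    dilatedEnergy lam (fun p ↦ k / ‖p‖ ^ 2) (fun s ↦ !₂[x s, y s]) (fun s ↦ !₂[x' s, y' s]) t =
      Real.exp (lam * t) *
        (x' t ^ 2 + y' t ^ 2 - lam * (x t * x' t + y t * y' t) +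
          (lam ^ 2 / 4) * (x t ^ 2 + y t ^ 2) + 2 * k / (x t ^ 2 + y t ^ 2)) := by
  simp only [dilatedEnergy, EuclideanSpace.real_norm_sq_eq, Fin.sum_univ_two, PiLp.sub_apply,
    PiLp.smul_apply, smul_eq_mul, Matrix.cons_val_zero, Matrix.cons_val_one]
  ring

theorem hasDerivAt_oscillator_add_inverse_sq_left {m k a b : ℝ} (h : a ^ 2 + b ^ 2 ≠ 0) :
    HasDerivAt (fun s ↦ m * (s ^ 2 + b ^ 2) + k / (s ^ 2 + b ^ 2))
      (2 * (m - k / (a ^ 2 + b ^ 2) ^ 2) * a) a := by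
  have hr : HasDerivAt (fun s ↦ s ^ 2 + b ^ 2) (2 * a) a := by
    simpa using (hasDerivAt_pow 2 a).add_const (b ^ 2)
  refine ((hr.const_mul m).add ((hasDerivAt_const a k).div hr h)).congr_deriv ?_
  ring

theorem hasDerivAt_oscillator_add_inverse_sq_right {m k a b : ℝ} (h : a ^ 2 + b ^ 2 ≠ 0) :
    HasDerivAt (fun s ↦ m * (a ^ 2 + s ^ 2) + k / (a ^ 2 + s ^ 2))
      (2 * (m - k / (a ^ 2 + b ^ 2) ^ 2) * b) b := by
  rw [add_comm] at h
  simpa only [add_comm (a ^ 2)] using hasDerivAt_oscillator_add_inverse_sq_left h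

end Plane

theorem stmt_19 (lam k : ℝ) (hlam : lam ≠ 0)
    (x y x' y' x'' y'' : ℝ → ℝ) (V : ℝ → ℝ → ℝ) (I Q : ℝ → ℝ)
    (hV : ∀ a b : ℝ, V a b = -(lam ^ 2 / 8) * (a ^ 2 + b ^ 2) + k / (a ^ 2 + b ^ 2))
    (hx : ∀ t, HasDerivAt x (x' t) t)
    (hy : ∀ t, HasDerivAt y (y' t) t)
    (hx' : ∀ t, HasDerivAt x' (x'' t) t)
    (hy' : ∀ t, HasDerivAt y' (y'' t) t)
    (hpos : ∀ t, 0 < x t ^ 2 + y t ^ 2)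
    (heqx : ∀ t, x'' t = - deriv (fun a => V a (y t)) (x t))
    (heqy : ∀ t, y'' t = - deriv (fun b => V (x t) b) (y t))
    (hQ : ∀ t, Q t = Real.exp (lam * t) *
      (x' t ^ 2 + y' t ^ 2 - lam * (x t * x' t + y t * y' t) +
        (lam ^ 2 / 4) * (x t ^ 2 + y t ^ 2) + 2 * k / (x t ^ 2 + y t ^ 2)))
    (hI : ∀ t, I t = Real.exp (lam * t) * (x t * y' t - y t * x' t) *
      (x' t ^ 2 + y' t ^ 2 - lam * (x t * x' t + y t * y' t) +
        (lam ^ 2 / 4) * (x t ^ 2 + y t ^ 2) + 2 * k / (x t ^ 2 + y t ^ 2))) :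
    (∀ t₁ t₂ : ℝ, I t₁ = I t₂) ∧ (∀ t₁ t₂ : ℝ, Q t₁ = Q t₂) := by
  have hforce_x t : x'' t = (lam ^ 2 / 4 + 2 * k / (x t ^ 2 + y t ^ 2) ^ 2) * x t := by
    simp_rw [heqx, hV, (hasDerivAt_oscillator_add_inverse_sq_left (hpos t).ne').deriv]
    ring
  have hforce_y t : y'' t = (lam ^ 2 / 4 + 2 * k / (x t ^ 2 + y t ^ 2) ^ 2) * y t := by
    simp_rw [heqy, hV, (hasDerivAt_oscillator_add_inverse_sq_right (hpos t).ne').deriv]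
    ring
  have hL := eq_of_forall_hasDerivAt_zero fun t ↦
    hasDerivAt_wronskian_zero (hx t) (hy t) (hforce_x t ▸ hx' t) (hforce_y t ▸ hy' t)
  have hQ_energy : Q = dilatedEnergy lam (fun p ↦ k / ‖p‖ ^ 2) (fun t ↦ !₂[x t, y t])
      fun t ↦ !₂[x' t, y' t] := funext fun t ↦ (hQ t).trans (dilatedEnergy_vec₂ ..).symm
  have hQ_const : ∀ t₁ t₂, Q t₁ = Q t₂ := hQ_energy ▸ eq_of_forall_hasDerivAt_zero fun t ↦ by
    refine hasDerivAt_dilatedEnergy_const_div_norm_sq (hasDerivAt_vec₂ (hx t) (hy t))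
      ((hasDerivAt_vec₂ (hx' t) (hy' t)).congr_deriv ?_) ?_
    · simp [norm_sq_vec₂, hforce_x, hforce_y, ← WithLp.toLp_smul]
    · exact vec₂_ne_zero (hpos t).ne'
  have hI_eq t : I t = (x t * y' t - y t * x' t) * Q t := by
    rw [hI, hQ]
    ring
  exact ⟨fun t₁ t₂ ↦ by rw [hI_eq, hI_eq, hL t₁ t₂, hQ_const t₁ t₂], hQ_const⟩
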